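/- Let (X, f) be a dynamical system, where X is a compact uniform space and f : X → X is a continuous surjection, and let D be an entourage. Then the equivalence relation ∼_D on CR(f), defined by x ∼_D y if there is a D-chain from x to y contained in CR(f), has only finitely many equivalence classes, and each equivalence class is a clopen subset of CR(f) (with the subspace topology). -/

import Mathlib

open Filter Set Function

section Defs

variable {X : Type*} [UniformSpace X]

/-- A `D`-chain from `x` to `y`: a finite sequence `x = c 0, c 1, …, c n` (`n ≥ 1`)
with `c n = y` and `(f (c i), c (i+1)) ∈ D` for all `i < n`. -/
def DChain (f : X → X) (D : Set (X × X)) (x y : X) : Prop :=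
  ∃ n : ℕ, 1 ≤ n ∧ ∃ c : ℕ → X, c 0 = x ∧ c n = y ∧ ∀ i < n, (f (c i), c (i + 1)) ∈ D

/-- A `D`-chain from `x` to `y` contained in the set `S`. -/
def DChainIn (f : X → X) (D : Set (X × X)) (S : Set X) (x y : X) : Prop :=
  ∃ n : ℕ, 1 ≤ n ∧ ∃ c : ℕ → X, c 0 = x ∧ c n = y ∧ (∀ i ≤ n, c i ∈ S) ∧
    ∀ i < n, (f (c i), c (i + 1)) ∈ D

/-- The set of chain-recurrent points of `f`. -/
def CR (f : X → X) : Set X :=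
  {x | ∀ D ∈ uniformity X, DChain f D x x}

/-- The set of non-wandering points of `f`. -/
def NonWandering (f : X → X) : Set X :=
  {x | ∀ U : Set X, IsOpen U → x ∈ U → ∃ n : ℕ, 1 ≤ n ∧ (f^[n] '' U ∩ U).Nonempty}

/-- `(x i)` is a `D`-pseudo orbit on the set `A ⊆ ℕ`. -/
def PseudoOrbitOn (f : X → X) (D : Set (X × X)) (x : ℕ → X) (A : Set ℕ) : Prop :=
  ∀ i ∈ A, (f (x i), x (i + 1)) ∈ D

/-- `(x i)` is `E`-traced by `y` on the set `B ⊆ ℕ`. -/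
def TracedOn (f : X → X) (E : Set (X × X)) (x : ℕ → X) (y : X) (B : Set ℕ) : Prop :=
  ∀ i ∈ B, (f^[i] y, x i) ∈ E

/-- Topological shadowing. -/
def TopShadowing (f : X → X) : Prop :=
  ∀ E ∈ uniformity X, ∃ D ∈ uniformity X,
    ∀ x : ℕ → X, PseudoOrbitOn f D x Set.univ → ∃ y : X, TracedOn f E x y Set.univ

/-- Topological `(F, G)`-shadowing for families `F`, `G` of subsets of `ℕ`. -/
def FGShadowing (f : X → X) (F G : Set (Set ℕ)) : Prop :=
  ∀ E ∈ uniformity X, ∃ D ∈ uniformity X,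
    ∀ x : ℕ → X, (∃ A ∈ F, PseudoOrbitOn f D x A) →
      ∃ y : X, ∃ B ∈ G, TracedOn f E x y B

end Defs

/-- A set `A ⊆ ℕ` is syndetic: gaps are bounded. -/
def Syndetic (A : Set ℕ) : Prop :=
  ∃ M : ℕ, ∀ k : ℕ, ∃ j ∈ A, k ≤ j ∧ j ≤ k + M

/-- A set `A ⊆ ℕ` is thick: contains arbitrarily long blocks of consecutive numbers. -/
def Thick (A : Set ℕ) : Prop :=
  ∀ n : ℕ, ∃ k : ℕ, ∀ i < n, k + i ∈ A

/-- A set `A ⊆ ℕ` is thickly syndetic. -/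
def ThicklySyndetic (A : Set ℕ) : Prop :=
  ∀ n : ℕ, Syndetic {k : ℕ | ∀ i < n, k + i ∈ A}

/-- A set `A ⊆ ℕ` is piecewise syndetic. -/
def PiecewiseSyndetic (A : Set ℕ) : Prop :=
  ∃ T S : Set ℕ, Thick T ∧ Syndetic S ∧ A = T ∩ S

/-- The family of thick subsets of `ℕ`. -/
def thickFamily : Set (Set ℕ) := {A | Thick A}

/-- The family of piecewise syndetic subsets of `ℕ`. -/
def psFamily : Set (Set ℕ) := {A | PiecewiseSyndetic A}

open scoped Classical in
/-- The lower density of a subset of `ℕ`. -/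
noncomputable def lowerDensity (A : Set ℕ) : ℝ :=
  Filter.atTop.liminf fun n : ℕ => ((Finset.range n).filter (· ∈ A)).card / (n : ℝ)

/-- The family of subsets of `ℕ` of lower density `1`. -/
noncomputable def densityOneFamily : Set (Set ℕ) := {A | lowerDensity A = 1}

section Dyn

variable {X : Type*} [UniformSpace X]

/-- `x` is a minimal point of `f`. -/
def MinimalPt (f : X → X) (x : X) : Prop :=
  ∀ U : Set X, IsOpen U → x ∈ U → Syndetic {n : ℕ | f^[n] x ∈ U}

/-- `(x, y)` is a syndetically proximal pair for `f`. -/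
def SyndProx (f : X → X) (x y : X) : Prop :=
  ∀ E ∈ uniformity X, Syndetic {n : ℕ | (f^[n] x, f^[n] y) ∈ E}

end Dyn

/-!
Replacing every point of a `V`-chain by a nearby one costs only one `V` on each side of every step,
so the set of points on `V`-loops has its closure inside the set of points on `D`-loops as soon as
`V ○ (V ○ V) ⊆ D`. By compactness, for small `V` all points of a `V`-loop are then close to
`CR f`. Hence a loop through `x ∈ CR f` can be pushed into `CR f`, and its final point can be
moved to any `y ∈ CR f` near `x`. So `∼_D` is a transitive entourage of `CR f`, and the balls of
such an entourage are clopen and, by total boundedness, finite in number.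
-/

open UniformSpace
open scoped Topology Uniformity SetRel

section TransitiveEntourage

variable {Y : Type*} [UniformSpace Y] {R : SetRel Y Y} [R.IsTrans]

theorem isClopen_ball_of_isTrans_of_mem_uniformity (x : Y) (hR : R ∈ 𝓤 Y) :
    IsClopen (ball x R) := by
  refine ⟨?_, isOpen_ball_of_mem_uniformity x hR⟩
  rw [← isOpen_compl_iff, isOpen_iff_mem_nhds]
  intro y hy
  filter_upwards [mem_nhds_right y hR] with z hzy hxz
  exact hy (R.trans hxz hzy)

theorem finite_range_ball_of_isTrans_of_mem_uniformity (hY : TotallyBounded (univ : Set Y))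
    (hR : R ∈ 𝓤 Y) : (range fun x ↦ ball x R).Finite := by
  obtain ⟨t, ht, hcover⟩ := hY _ (symmetrize_mem_uniformity hR)
  refine (ht.image fun x ↦ ball x R).subset ?_
  rintro _ ⟨x, rfl⟩
  obtain ⟨y, hyt, hxy, hyx⟩ := mem_iUnion₂.1 (hcover (mem_univ x))
  exact ⟨y, hyt, (ball_subset_of_mem hxy).antisymm (ball_subset_of_mem hyx)⟩

end TransitiveEntourage

section Chains

variable {X : Type*} {f : X → X} {D V W : SetRel X X} {S : Set X} {p x y : X}

/-- One step of a `D`-chain contained in `S`; chains in `S` are its transitive closure. -/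
def ChainStepIn (f : X → X) (D : SetRel X X) (S : Set X) (x y : X) : Prop :=
  x ∈ S ∧ y ∈ S ∧ (f x, y) ∈ D

theorem ChainStepIn.dChainIn (hxy : ChainStepIn f D S x y) : DChainIn f D S x y := by
  obtain ⟨hx, hy, hD⟩ := hxy
  refine ⟨1, le_rfl, fun i ↦ Nat.casesOn i x fun _ ↦ y, rfl, rfl, ?_, ?_⟩
  · rintro (_ | i) -
    exacts [hx, hy]
  · intro i hi
    obtain rfl := Nat.lt_one_iff.1 hi
    exact hD

theorem DChainIn.head {z : X} (hxy : ChainStepIn f D S x y) (hyz : DChainIn f D S y z) :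
    DChainIn f D S x z := by
  obtain ⟨hx, -, hD⟩ := hxy
  obtain ⟨n, -, c, rfl, rfl, hcS, hcD⟩ := hyz
  refine ⟨n + 1, n.succ_pos, fun i ↦ Nat.casesOn i x c, rfl, rfl, ?_, ?_⟩
  · rintro (_ | i) hi
    exacts [hx, hcS i (Nat.le_of_succ_le_succ hi)]
  · rintro (_ | i) hi
    exacts [hD, hcD i (Nat.lt_of_succ_lt_succ hi)]

theorem dChainIn_iff_transGen :
    DChainIn f D S x y ↔ Relation.TransGen (ChainStepIn f D S) x y := by
  constructor
  · rintro ⟨n, hn, c, rfl, rfl, hcS, hcD⟩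
    refine (transGen_of_succ_of_lt (fun i j ↦ ChainStepIn f D S (c i) (c j)) ?_ hn).lift c
      fun _ _ ↦ id
    exact fun i hi ↦ ⟨hcS i hi.2.le, hcS (i + 1) hi.2, hcD i hi.2⟩
  · intro h
    induction h using Relation.TransGen.head_induction_on with
    | single hxy => exact hxy.dChainIn
    | head hxy _ ih => exact ih.head hxy

theorem dChainIn_univ : DChainIn f D univ x y ↔ DChain f D x y := by
  simp only [DChainIn, DChain, mem_univ, implies_true, true_and]

theorem DChainIn.mem_right (h : DChainIn f D S x y) : y ∈ S := by
  obtain ⟨n, -, c, -, rfl, hcS, -⟩ := h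
  exact hcS n le_rfl

theorem DChain.mono (hVW : V ⊆ W) (h : DChain f V x y) : DChain f W x y := by
  obtain ⟨n, hn, c, hx, hy, hc⟩ := h
  exact ⟨n, hn, c, hx, hy, fun i hi ↦ hVW (hc i hi)⟩

/-- The points lying on a closed `D`-chain, so that `CR f` is the intersection of these sets over
all entourages `D`. -/
def chainLoops (f : X → X) (D : SetRel X X) : Set X :=
  {x | DChain f D x x}

/-- The relation `∼_D` of being joined by a `D`-chain contained in `S`, on the subtype `S`. -/
def chainRel (f : X → X) (D : SetRel X X) (S : Set X) : SetRel S S :=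
  {p | DChainIn f D S p.1 p.2}

instance isTrans_chainRel : (chainRel f D S).IsTrans where
  trans _ _ _ hxy hyz :=
    dChainIn_iff_transGen.2 ((dChainIn_iff_transGen.1 hxy).trans (dChainIn_iff_transGen.1 hyz))

theorem image_val_ball_chainRel (x : S) :
    Subtype.val '' ball x (chainRel f D S) = {y | DChainIn f D S x y} := by
  ext y
  exact ⟨fun ⟨_, hxz, hzy⟩ ↦ hzy ▸ hxz, fun hxy ↦ ⟨⟨y, hxy.mem_right⟩, hxy, rfl⟩⟩

/-- The points that may be replaced by `q` in a chain, at the cost of composing with `V` the step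
into the point and the step out of it. -/
def chainNhd (f : X → X) (V : SetRel X X) (q : X) : Set X :=
  {p | (p, q) ∈ V ∧ (f q, f p) ∈ V}

theorem dChainIn_of_mem_chainLoops (hWV : W ⊆ V) (hVD : V ○ (V ○ V) ⊆ D)
    (hS : chainLoops f W ⊆ ⋃ q ∈ S, chainNhd f V q) (hp : p ∈ chainLoops f W)
    (hx : x ∈ S) (hxp : (f x, f p) ∈ V) (hy : y ∈ S) (hpy : (p, y) ∈ V) :
    DChainIn f D S x y := by
  have hpp := dChainIn_iff_transGen.1 (dChainIn_univ.2 hp)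
  rw [dChainIn_iff_transGen]
  suffices hmove : ∀ b, Relation.TransGen (ChainStepIn f W univ) p b →
      Relation.TransGen (ChainStepIn f W univ) b p →
      ∀ b' ∈ S, (b, b') ∈ V → Relation.TransGen (ChainStepIn f D S) x b' from
    hmove p hpp hpp y hy hpy
  intro b hpb
  induction hpb with
  | single hstep =>
    intro _ b' hb' hbb'
    exact .single ⟨hx, hb', hVD ⟨_, hxp, _, hWV hstep.2.2, hbb'⟩⟩
  | tail hpa hstep ih =>
    intro hbp b' hb' hbb'
    have hap := hbp.head hstep
    obtain ⟨a', ha', haa', hfa⟩ :=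
      mem_iUnion₂.1 (hS (dChainIn_univ.1 (dChainIn_iff_transGen.2 (hap.trans hpa))))
    exact (ih hap a' ha' haa').tail ⟨ha', hb', hVD ⟨_, hfa, _, hWV hstep.2.2, hbb'⟩⟩

variable [UniformSpace X]

theorem chainNhd_mem_nhds (hf : Continuous f) (hV : V ∈ 𝓤 X) (q : X) : chainNhd f V q ∈ 𝓝 q :=
  inter_mem (mem_nhds_right q hV) (hf.continuousAt (mem_nhds_left (f q) hV))

theorem closure_chainLoops_subset (hf : Continuous f) (hV : V ∈ 𝓤 X) (hVD : V ○ (V ○ V) ⊆ D) :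
    closure (chainLoops f V) ⊆ chainLoops f D := by
  intro q hq
  obtain ⟨p, ⟨hpq, hqp⟩, hp⟩ := mem_closure_iff_nhds.1 hq _ (chainNhd_mem_nhds hf hV q)
  have hself : chainLoops f V ⊆ ⋃ r ∈ univ, chainNhd f V r := fun r _ ↦
    mem_iUnion₂.2 ⟨r, mem_univ r, refl_mem_uniformity hV, refl_mem_uniformity hV⟩
  exact dChainIn_univ.1
    (dChainIn_of_mem_chainLoops Subset.rfl hVD hself hp (mem_univ q) hqp (mem_univ q) hpq)

theorem exists_chainLoops_subset [CompactSpace X] (hf : Continuous f) {U : Set X}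
    (hU : ∀ x ∈ CR f, U ∈ 𝓝 x) : ∃ W ∈ 𝓤 X, chainLoops f W ⊆ U := by
  let K : {W : SetRel X X // W ∈ 𝓤 X} → Set X := fun W ↦ closure (chainLoops f W)
  have hK_mono : Monotone K := fun _ _ hVW ↦ closure_mono fun _ ↦ DChain.mono hVW
  have hK_directed : Directed (· ⊇ ·) K := fun V W ↦
    ⟨⟨V ∩ W, inter_mem V.2 W.2⟩, hK_mono inter_subset_left, hK_mono inter_subset_right⟩
  have hK_inter : ⋂ W, K W ⊆ CR f := by
    intro x hx D hD
    obtain ⟨V, hV, hVD⟩ := comp3_mem_uniformity hD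
    exact closure_chainLoops_subset hf hV hVD (mem_iInter.1 hx ⟨V, hV⟩)
  have : Nonempty {W : SetRel X X // W ∈ 𝓤 X} := ⟨⟨univ, univ_mem⟩⟩
  obtain ⟨W, hW⟩ := exists_subset_nhds_of_isCompact' hK_directed
    (fun _ ↦ isClosed_closure.isCompact) (fun _ ↦ isClosed_closure)
    fun x hx ↦ hU x (hK_inter hx)
  exact ⟨W, W.2, subset_closure.trans hW⟩

theorem chainRel_CR_mem_uniformity [CompactSpace X] (hf : Continuous f) (hD : D ∈ 𝓤 X) :
    chainRel f D (CR f) ∈ 𝓤 (CR f) := by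
  obtain ⟨V, hV, hVD⟩ := comp3_mem_uniformity hD
  obtain ⟨W, hW, hWCR⟩ := exists_chainLoops_subset hf (U := ⋃ q ∈ CR f, chainNhd f V q)
    fun q hq ↦ mem_of_superset (chainNhd_mem_nhds hf hV q) (subset_biUnion_of_mem hq)
  have hloops : chainLoops f (W ∩ V) ⊆ ⋃ q ∈ CR f, chainNhd f V q := fun _ hp ↦
    hWCR (hp.mono inter_subset_left)
  rw [uniformity_subtype]
  filter_upwards [preimage_mem_comap hV] with ⟨x, y⟩ hxy
  exact dChainIn_of_mem_chainLoops inter_subset_right hVD hloops (x.2 _ (inter_mem hW hV))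
    x.2 (refl_mem_uniformity hV) y.2 hxy

end Chains

theorem chain_relation_classes_finite_clopen_general
    {X : Type*} [UniformSpace X] [CompactSpace X]
    (f : X → X) (hf : Continuous f) (D : Set (X × X)) (hD : D ∈ uniformity X) :
    {C : Set X | ∃ x ∈ CR f, C = {y | DChainIn f D (CR f) x y}}.Finite ∧
    ∀ x ∈ CR f,
      IsClopen ((Subtype.val ⁻¹' {y | DChainIn f D (CR f) x y}) : Set (CR f)) := by
  have hR := chainRel_CR_mem_uniformity hf hD
  have hCR : TotallyBounded (univ : Set (CR f)) :=
    totallyBounded_preimage isUniformEmbedding_subtype_val.isUniformInducing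
      isCompact_univ.totallyBounded
  refine ⟨?_, fun x hx ↦
    isClopen_ball_of_isTrans_of_mem_uniformity (R := chainRel f D (CR f)) ⟨x, hx⟩ hR⟩
  refine ((finite_range_ball_of_isTrans_of_mem_uniformity hCR hR).image
    (Subtype.val '' ·)).subset ?_
  rintro _ ⟨x, hx, rfl⟩
  exact ⟨_, ⟨⟨x, hx⟩, rfl⟩, image_val_ball_chainRel ⟨x, hx⟩⟩

/-- the relation ∼_D on CR(f) has finitely many equivalence classes,
each of which is clopen in CR(f) with the subspace topology. -/
theorem chain_relation_classes_finite_clopen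
    {X : Type*} [UniformSpace X] [CompactSpace X]
    (f : X → X) (hf : Continuous f) (hsurj : Function.Surjective f)
    (D : Set (X × X)) (hD : D ∈ uniformity X) :
    {C : Set X | ∃ x ∈ CR f, C = {y | DChainIn f D (CR f) x y}}.Finite ∧
    ∀ x ∈ CR f,
      IsClopen ((Subtype.val ⁻¹' {y | DChainIn f D (CR f) x y}) : Set (CR f)) :=
  chain_relation_classes_finite_clopen_general f hf D hD
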